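/- Let α be a type, let x and y be elements of α, and set A = (x,x) and B = (y,y). Then for every n ≥ 0, the d(n)-th circular shift C_{d(n)}(S_{A,B}(n)) is a palindromic list, where d is Stern's diatomic sequence. -/

import Mathlib

/-- Stern's diatomic sequence. -/
def stern : ℕ → ℕ
  | 0 => 0
  | 1 => 1
  | n + 2 =>
    if (n + 2) % 2 = 0 then stern ((n + 2) / 2)
    else stern ((n + 2) / 2) + stern ((n + 2) / 2 + 1)
decreasing_by all_goals omega

/-- OEIS A003602: a(1)=1, a(2n)=a(n), a(2n+1)=n+1. (a(0)=0 as junk value.) -/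
def aseq : ℕ → ℕ
  | 0 => 0
  | 1 => 1
  | n + 2 =>
    if (n + 2) % 2 = 0 then aseq ((n + 2) / 2)
    else (n + 2) / 2 + 1
decreasing_by all_goals omega

-- the modified sequence `a*`: zero at powers of two.
open Classical in
noncomputable def aStar (j : ℕ) : ℕ :=
  if ∃ k, j = 2 ^ k then 0 else aseq j

theorem aseq_le (n : ℕ) : aseq n ≤ n := by
  induction n using Nat.strong_induction_on with
  | _ n ih =>
    match n with
    | 0 => simp [aseq]
    | 1 => simp [aseq]
    | m + 2 =>
      rw [aseq]
      split
      · exact le_trans (ih ((m + 2) / 2) (by omega)) (by omega)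
      · omega

theorem aStar_le (j : ℕ) : aStar j ≤ j := by
  unfold aStar
  split
  · omega
  · exact aseq_le j

/-- The Markov-type sequence `S_{A,B}(n)`. -/
noncomputable def mseq {α : Type*} (A B : List α) : ℕ → List α
  | 0 => A
  | 1 => B
  | 2 => A ++ B
  | n + 3 =>
    if (n + 3) % 2 = 0 then
      mseq A B ((n + 3) / 2) ++ mseq A B (aseq ((n + 3) / 2))
    else
      mseq A B (aStar ((n + 4) / 2 - 1)) ++ mseq A B ((n + 4) / 2)
decreasing_by
  all_goals first
    | omega
    | exact lt_of_le_of_lt (aseq_le _) (by omega)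
    | exact lt_of_le_of_lt (aStar_le _) (by omega)

theorem stern_even (j : ℕ) (hj : 1 ≤ j) : stern (2 * j) = stern j := by
  obtain ⟨k, rfl⟩ : ∃ k, j = k + 1 := ⟨j - 1, by omega⟩
  rw [show 2 * (k + 1) = 2 * k + 2 by ring, stern, if_pos (by omega)]
  congr 1; omega

theorem stern_odd (j : ℕ) (hj : 1 ≤ j) : stern (2 * j + 1) = stern j + stern (j + 1) := by
  obtain ⟨k, rfl⟩ : ∃ k, j = k + 1 := ⟨j - 1, by omega⟩
  rw [show 2 * (k + 1) + 1 = 2 * k + 1 + 2 by ring, stern, if_neg (by omega)]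
  rw [show (2 * k + 1 + 2) / 2 = k + 1 by omega]

theorem aseq_even (j : ℕ) (hj : 1 ≤ j) : aseq (2 * j) = aseq j := by
  obtain ⟨k, rfl⟩ : ∃ k, j = k + 1 := ⟨j - 1, by omega⟩
  rw [show 2 * (k + 1) = 2 * k + 2 by ring, aseq, if_pos (by omega)]
  congr 1; omega

theorem aseq_odd (j : ℕ) (hj : 1 ≤ j) : aseq (2 * j + 1) = j + 1 := by
  obtain ⟨k, rfl⟩ : ∃ k, j = k + 1 := ⟨j - 1, by omega⟩
  rw [show 2 * (k + 1) + 1 = 2 * k + 1 + 2 by ring, aseq, if_neg (by omega)]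
  omega

theorem aStar_odd (j : ℕ) (hj : 1 ≤ j) : aStar (2 * j + 1) = j + 1 := by
  rw [aStar, if_neg, aseq_odd j hj]
  rintro ⟨k, hk⟩
  cases k with
  | zero => simp at hk; omega
  | succ k => rw [pow_succ] at hk; omega

theorem aStar_even (j : ℕ) (hj : 1 ≤ j) : aStar (2 * j) = aStar j := by
  have : (∃ k, 2 * j = 2 ^ k) ↔ ∃ k, j = 2 ^ k := by
    constructor
    · rintro ⟨k, hk⟩
      cases k with
      | zero => omega
      | succ k => exact ⟨k, by rw [pow_succ] at hk; omega⟩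
    · rintro ⟨k, hk⟩
      exact ⟨k + 1, by rw [pow_succ]; omega⟩
  by_cases h : ∃ k, j = 2 ^ k
  · rw [aStar, aStar, if_pos h, if_pos (this.2 h)]
  · rw [aStar, aStar, if_neg h, if_neg (fun h2 => h (this.1 h2)), aseq_even j hj]

theorem mseq_even {α : Type*} (A B : List α) (j : ℕ) (hj : 2 ≤ j) :
    mseq A B (2 * j) = mseq A B j ++ mseq A B (aseq j) := by
  obtain ⟨k, rfl⟩ : ∃ k, j = k + 2 := ⟨j - 2, by omega⟩
  rw [show 2 * (k + 2) = 2 * k + 1 + 3 by ring, mseq, if_pos (by omega)]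
  rw [show (2 * k + 1 + 3) / 2 = k + 2 by omega]

theorem mseq_odd {α : Type*} (A B : List α) (j : ℕ) (hj : 1 ≤ j) :
    mseq A B (2 * j + 1) = mseq A B (aStar j) ++ mseq A B (j + 1) := by
  obtain ⟨k, rfl⟩ : ∃ k, j = k + 1 := ⟨j - 1, by omega⟩
  rw [show 2 * (k + 1) + 1 = 2 * k + 3 by ring, mseq, if_neg (by omega)]
  rw [show (2 * k + 4) / 2 = k + 2 by omega]
  rfl

/-- doubling every letter -/
def dbl {α : Type*} (l : List α) : List α := l.flatMap (fun a => [a, a])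

theorem dbl_append {α : Type*} (l m : List α) : dbl (l ++ m) = dbl l ++ dbl m := by
  simp [dbl]

theorem dbl_length {α : Type*} (l : List α) : (dbl l).length = 2 * l.length := by
  induction l with
  | nil => rfl
  | cons a l ih => simp [dbl] at ih ⊢; omega

theorem dbl_reverse {α : Type*} (l : List α) : (dbl l).reverse = dbl l.reverse := by
  induction l with
  | nil => rfl
  | cons a l ih =>
    rw [List.reverse_cons, dbl_append, ← ih, show a :: l = [a] ++ l from rfl, dbl_append,
      List.reverse_append]
    rfl

theorem rot_pal {α : Type*} (u v : List α) (hu : u.reverse = u) (hv : v.reverse = v) :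
    ((dbl (u ++ v)).rotate u.length).reverse = (dbl (u ++ v)).rotate u.length := by
  have h1 : (dbl u).reverse = dbl u := by rw [dbl_reverse, hu]
  have h2 : (dbl v).reverse = dbl v := by rw [dbl_reverse, hv]
  have hl := dbl_length u
  rw [dbl_append]
  generalize dbl u = U at *
  generalize dbl v = V at *
  obtain ⟨p, q, rfl, hp⟩ : ∃ p q, U = p ++ q ∧ p.length = u.length :=
    ⟨U.take u.length, U.drop u.length, by simp, by simp; omega⟩
  have hq : q.length = p.length := by simp at hl; omega
  rw [List.reverse_append] at h1
  obtain ⟨h3, h4⟩ := List.append_inj h1 (by simpa using hq)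
  rw [← hp, List.append_assoc, List.rotate_append_length_eq]
  simp [h2, h3, h4]

theorem inv {α : Type*} (x y : α) (n : ℕ) (hn : 1 ≤ n) :
    ∃ L R u v : List α,
      mseq [x, x] [y, y] (aStar n) = dbl L ∧ mseq [x, x] [y, y] (aseq (n + 1)) = dbl R ∧
      mseq [x, x] [y, y] (n + 1) = dbl (u ++ v) ∧
      u.reverse = u ∧ v.reverse = v ∧ (L ++ u).reverse = L ++ u ∧ (v ++ R).reverse = v ++ R ∧
      L.length = stern n ∧ v.length = stern n ∧
      R.length = stern (n + 1) ∧ u.length = stern (n + 1) := by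
  induction n using Nat.strong_induction_on with
  | _ n ih =>
  rcases Nat.lt_or_ge n 2 with h | h
  · obtain rfl : n = 1 := by omega
    have h1 : aStar 1 = 0 := by rw [aStar, if_pos ⟨0, rfl⟩]
    have h2 : aseq 2 = 1 := by simp [aseq]
    have h3 : stern 2 = 1 := by simp [stern]
    refine ⟨[x], [y], [x], [y], ?_⟩
    simp [h1, h2, h3, mseq, dbl, stern]
  · rcases Nat.even_or_odd' n with ⟨j, rfl | rfl⟩
    · obtain ⟨L, R, u, v, hL, hR, hS, hu, hv, hLu, hvR, l1, l2, l3, l4⟩ :=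
        ih j (by omega) (by omega)
      refine ⟨L, u ++ v, L ++ u, v, ?_, ?_, ?_, hLu, hv, ?_, ?_, ?_, ?_, ?_, ?_⟩
      · rw [aStar_even j (by omega), hL]
      · rw [aseq_odd j (by omega), hS]
      · rw [mseq_odd _ _ j (by omega), hL, hS, ← dbl_append, List.append_assoc]
      · rw [List.reverse_append, hLu]
        rw [List.reverse_append, hu] at hLu
        rw [← hLu, List.append_assoc, ← List.append_assoc L, ← hLu]
        simp
      · simp [hu, hv]
      · rw [stern_even j (by omega), l1]
      · rw [stern_even j (by omega), l2]
      · rw [stern_odd j (by omega), List.length_append, l2, l4, add_comm]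
      · rw [stern_odd j (by omega), List.length_append, l1, l4]
    · obtain ⟨L, R, u, v, hL, hR, hS, hu, hv, hLu, hvR, l1, l2, l3, l4⟩ :=
        ih j (by omega) (by omega)
      have e : 2 * j + 1 + 1 = 2 * (j + 1) := by ring
      refine ⟨u ++ v, R, u, v ++ R, ?_, ?_, ?_, hu, hvR, ?_, ?_, ?_, ?_, ?_, ?_⟩
      · rw [aStar_odd j (by omega), hS]
      · rw [e, aseq_even _ (by omega), hR]
      · rw [e, mseq_even _ _ _ (by omega), hR, hS, ← dbl_append, List.append_assoc]
      · simp [hu, hv]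
      · rw [List.reverse_append, hvR]
        rw [List.reverse_append, hv] at hvR
        rw [← List.append_assoc, hvR]
      · rw [stern_odd j (by omega), List.length_append, l2, l4, add_comm]
      · rw [stern_odd j (by omega), List.length_append, l2, l3]
      · rw [e, stern_even _ (by omega), l3]
      · rw [e, stern_even _ (by omega), l4]

theorem stmt3 {α : Type*} (x y : α) (n : ℕ) :
    ((mseq [x, x] [y, y] n).rotate (stern n)).reverse =
      (mseq [x, x] [y, y] n).rotate (stern n) := by
  rcases n with _ | _ | n
  · simp [mseq, stern]
  · simp [mseq, stern]
  · obtain ⟨L, R, u, v, hL, hR, hS, hu, hv, hLu, hvR, l1, l2, l3, l4⟩ :=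
      inv x y (n + 1) (by omega)
    rw [hS, ← l4]
    exact rot_pal u v hu hv
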